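/- Let (α1, α2, α3) be a morphism of Schreier extensions from (k : K → X, f : X → M) to (k' : K' → X', f' : X' → M'). If α1 and α3 are surjective, then α2 is surjective. -/

import Mathlib

/-- A monoid extension: `K`, `X` additive monoids (not assumed commutative),
`M` a multiplicative monoid, `k : K → X` an injective monoid homomorphism whose image
is `{x | f x = 1}`, and `f : X → M` a surjective monoid homomorphism. -/
structure MonoidExtension {K X M : Type*} [AddMonoid K] [AddMonoid X] [Monoid M]
    (k : K → X) (f : X → M) : Prop where
  k_add : ∀ a b : K, k (a + b) = k a + k b
  k_zero : k 0 = 0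
  k_inj : Function.Injective k
  ker_eq : ∀ x : X, f x = 1 ↔ x ∈ Set.range k
  f_add : ∀ x y : X, f (x + y) = f x * f y
  f_zero : f 0 = 1
  f_surj : Function.Surjective f

/-- The set `B_m` of representatives of `m`. -/
def Reps {K X M : Type*} [AddMonoid K] [AddMonoid X] [Monoid M]
    (k : K → X) (f : X → M) (m : M) : Set X :=
  {u | f u = m ∧ ∀ x : X, f x = m → ∃! a : K, x = k a + u}

/-- A monoid extension is a Schreier extension if every `m` has a representative. -/
def IsSchreier {K X M : Type*} [AddMonoid K] [AddMonoid X] [Monoid M]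
    (k : K → X) (f : X → M) : Prop :=
  ∀ m : M, (Reps k f m).Nonempty

/-- The elements `u` such that every `x` over `m` has the form `k a + u`. Unlike in `Reps`, `a` need
not be unique (as for weakly Schreier extensions), and `u` itself need not lie over `m`. -/
def FiberGenerators {K X M : Type*} [Add X] (k : K → X) (f : X → M) (m : M) : Set X :=
  {u | f ⁻¹' {m} ⊆ Set.range (k · + u)}

theorem reps_subset_fiberGenerators {K X M : Type*} [AddMonoid K] [AddMonoid X] [Monoid M]
    (k : K → X) (f : X → M) (m : M) : Reps k f m ⊆ FiberGenerators k f m := by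
  rintro u ⟨-, hu⟩ x hx
  obtain ⟨a, ha, -⟩ := hu x hx
  exact ⟨a, ha.symm⟩

section ShortFive

variable {K X K' X' M' : Type*} [Add X] [Add X'] {k : K → X} {k' : K' → X'} {f' : X' → M'}
  {α1 : K → K'} {α2 : X → X'}

theorem preimage_subset_range_of_mem_fiberGenerators
    (hα2_add : ∀ x y : X, α2 (x + y) = α2 x + α2 y) (hsq1 : ∀ a : K, α2 (k a) = k' (α1 a))
    (h1 : Function.Surjective α1) {m' : M'} {u : X} (hu : α2 u ∈ FiberGenerators k' f' m') :
    f' ⁻¹' {m'} ⊆ Set.range α2 := by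
  intro y hy
  obtain ⟨b, rfl⟩ := hu hy
  obtain ⟨a, rfl⟩ := h1 b
  exact ⟨k a + u, by rw [hα2_add, hsq1]⟩

theorem short_five_epi_general {M : Type*} {α3 : M → M'}
    (hα2_add : ∀ x y : X, α2 (x + y) = α2 x + α2 y) (hsq1 : ∀ a : K, α2 (k a) = k' (α1 a))
    (hgen : ∀ m : M, ∃ u : X, α2 u ∈ FiberGenerators k' f' (α3 m))
    (h1 : Function.Surjective α1) (h3 : Function.Surjective α3) :
    Function.Surjective α2 := by
  intro y
  obtain ⟨m, hm⟩ := h3 (f' y)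
  obtain ⟨u, hu⟩ := hgen m
  exact preimage_subset_range_of_mem_fiberGenerators hα2_add hsq1 h1 hu hm.symm

end ShortFive

/-- Short Five Lemma for Schreier extensions, part 2 (Proposition 2.9(2)): if `α1` and
`α3` are surjective, then `α2` is surjective. -/
theorem short_five_epi {K X M K' X' M' : Type*}
    [AddMonoid K] [AddMonoid X] [Monoid M] [AddMonoid K'] [AddMonoid X'] [Monoid M']
    (k : K → X) (f : X → M) (k' : K' → X') (f' : X' → M')
    (hE : MonoidExtension k f) (hE' : MonoidExtension k' f')
    (hS : IsSchreier k f) (hS' : IsSchreier k' f')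
    (α1 : K → K') (α2 : X → X') (α3 : M → M')
    (hα1_add : ∀ a b : K, α1 (a + b) = α1 a + α1 b) (hα1_zero : α1 0 = 0)
    (hα2_add : ∀ x y : X, α2 (x + y) = α2 x + α2 y) (hα2_zero : α2 0 = 0)
    (hα3_mul : ∀ m n : M, α3 (m * n) = α3 m * α3 n) (hα3_one : α3 1 = 1)
    (hsq1 : ∀ a : K, α2 (k a) = k' (α1 a))
    (hsq2 : ∀ x : X, f' (α2 x) = α3 (f x))
    (hrep : ∀ m : M, ∀ u ∈ Reps k f m, α2 u ∈ Reps k' f' (α3 m))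
    (h1 : Function.Surjective α1) (h3 : Function.Surjective α3) :
    Function.Surjective α2 := by
  exact short_five_epi_general hα2_add hsq1
    (fun m => (hS m).imp fun u hu => reps_subset_fiberGenerators k' f' _ (hrep m u hu)) h1 h3
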